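/- arXiv:1610.03830 — 6 statements merged into one kernel-verified Lean document; each statement's English description precedes it below -/
import Mathlib

section
/- Let n ≥ 2 and let l : ℤ/n → {1,…,n} be a bijection (the level function of an n-crossing). Then the sizes of adjacent crossing-centered bipyramids differ by 0 or 4: for every i with 1 ≤ i ≤ n−2, |m_i(l) − m_{i+1}(l)| = 0 or |m_i(l) − m_{i+1}(l)| = 4. -/
/-- The cyclic successor `j + 1` in `ℤ/n` (modeled as `Fin n`). -/
def cyc {n : ℕ} (j : Fin n) : Fin n :=
  ⟨(j.val + 1) % n, Nat.mod_lt _ (Nat.zero_lt_of_lt j.isLt)⟩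

/-- The cyclic predecessor `j - 1` in `ℤ/n` (modeled as `Fin n`). -/
def cycPred {n : ℕ} (j : Fin n) : Fin n :=
  ⟨(j.val + (n - 1)) % n, Nat.mod_lt _ (Nat.zero_lt_of_lt j.isLt)⟩

/-- The size `m i` of the `i`-th crossing-centered bipyramid of the `n`-crossing with
level function `l : ℤ/n → {1, …, n}`:
`m_i(l) = 2·|{ j : min(l j, l (j+1)) ≤ i  and  i+1 ≤ max(l j, l (j+1)) }|`. -/
def bipSize (n : ℕ) (l : Fin n → ℕ) (i : ℕ) : ℕ :=
  2 * (Finset.univ.filter fun j : Fin n =>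
      min (l j) (l (cyc j)) ≤ i ∧ i + 1 ≤ max (l j) (l (cyc j))).card

/-!
Let `S i` be the set of strands at level at most `i`. The bipyramid size `m i` is twice the number
of edges of the `n`-cycle joining `S i` to its complement. A rotation enters `S i` as often as it
leaves it, so `m i` is four times the number of exits from `S i`. Passing from `S i` to `S (i + 1)`
adds a single strand, which changes the number of exits by at most one.
-/

section exitSet

open Finset

variable {α : Type*} [DecidableEq α] (σ : Equiv.Perm α) (S T : Finset α)

/-- The exits of a permutation `σ` from `S`: the points of `S` that `σ` moves out of `S`.
The entries of `σ` into `S` are encoded as the exits from the complement of `S`. -/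
def exitSet : Finset α := {a ∈ S | σ a ∉ S}

theorem mem_exitSet {σ : Equiv.Perm α} {S : Finset α} {a : α} :
    a ∈ exitSet σ S ↔ a ∈ S ∧ σ a ∉ S :=
  mem_filter

theorem card_exitSet_compl [Fintype α] : #(exitSet σ Sᶜ) = #(exitSet σ S) := by
  have entries : exitSet σ Sᶜ = S.map σ.symm.toEmbedding \ S := by
    ext a
    simp [mem_exitSet, mem_map_equiv, and_comm]
  have exits : exitSet σ S = S \ S.map σ.symm.toEmbedding := by
    ext a
    simp [mem_exitSet, mem_map_equiv]
  rw [entries, exits, card_sdiff_comm (card_map _)]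

theorem card_exitSet_union_le : #(exitSet σ (S ∪ T)) ≤ #(exitSet σ S) + #T := by
  have cover : exitSet σ (S ∪ T) ⊆ exitSet σ S ∪ T := fun a ha ↦ by
    simp only [mem_exitSet, mem_union] at ha ⊢
    tauto
  exact (card_le_card cover).trans (card_union_le _ _)

theorem card_exitSet_le_card_exitSet_union : #(exitSet σ S) ≤ #(exitSet σ (S ∪ T)) + #T := by
  have cover : exitSet σ S ⊆ exitSet σ (S ∪ T) ∪ T.map σ.symm.toEmbedding := fun a ha ↦ by
    simp only [mem_exitSet, mem_union, mem_map_equiv, Equiv.symm_symm] at ha ⊢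
    tauto
  calc #(exitSet σ S) ≤ #(exitSet σ (S ∪ T)) + #(T.map σ.symm.toEmbedding) :=
        (card_le_card cover).trans (card_union_le _ _)
    _ = #(exitSet σ (S ∪ T)) + #T := by rw [card_map]

end exitSet

section bipSize

open Finset

theorem cyc_eq_finRotate {n : ℕ} (j : Fin n) : cyc j = finRotate n j := by
  have := j.neZero
  ext
  simp [cyc, Fin.val_add]

variable (n : ℕ) (l : Fin n → ℕ) (i : ℕ)

theorem bipSize_eq_four_mul_card_exitSet :
    bipSize n l i = 4 * #(exitSet (finRotate n) {j | l j ≤ i}) := by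
  set S : Finset (Fin n) := {j | l j ≤ i} with hS
  have separated_eq :
      univ.filter (fun j ↦ min (l j) (l (cyc j)) ≤ i ∧ i + 1 ≤ max (l j) (l (cyc j))) =
        exitSet (finRotate n) S ∪ exitSet (finRotate n) Sᶜ := by
    ext j
    simp only [hS, mem_exitSet, mem_union, mem_compl, mem_filter_univ, ← cyc_eq_finRotate]
    omega
  have disj : Disjoint (exitSet (finRotate n) S) (exitSet (finRotate n) Sᶜ) :=
    disjoint_compl_right.mono (filter_subset _ _) (filter_subset _ _)
  rw [bipSize, separated_eq, card_union_of_disjoint disj, card_exitSet_compl]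
  ring

theorem abs_bipSize_sub_bipSize_succ_le :
    |(bipSize n l i : ℤ) - bipSize n l (i + 1)| ≤ 4 * #{j | l j = i + 1} := by
  have sublevel_succ :
      univ.filter (l · ≤ i + 1) = univ.filter (l · ≤ i) ∪ univ.filter (l · = i + 1) := by
    simp only [← filter_or, Nat.le_succ_iff]
  have upper := card_exitSet_union_le (finRotate n) {j | l j ≤ i} {j | l j = i + 1}
  have lower := card_exitSet_le_card_exitSet_union (finRotate n) {j | l j ≤ i} {j | l j = i + 1}
  rw [bipSize_eq_four_mul_card_exitSet, bipSize_eq_four_mul_card_exitSet, sublevel_succ, abs_le]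
  omega

theorem adjacent_bipyramid_sizes_differ_by_zero_or_four_general
    (hl : (l ⁻¹' {i + 1}).Subsingleton) :
    |(bipSize n l i : ℤ) - (bipSize n l (i + 1) : ℤ)| = 0 ∨
      |(bipSize n l i : ℤ) - (bipSize n l (i + 1) : ℤ)| = 4 := by
  have four_dvd (k : ℕ) : (4 : ℤ) ∣ bipSize n l k :=
    mod_cast Dvd.intro _ (bipSize_eq_four_mul_card_exitSet n l k).symm
  have four_dvd_abs := (dvd_abs _ _).2 (dvd_sub (four_dvd i) (four_dvd (i + 1)))
  have card_level_le : #{j | l j = i + 1} ≤ 1 :=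
    card_le_one.2 fun a ha b hb ↦ hl (mem_filter.1 ha).2 (mem_filter.1 hb).2
  have abs_le_four := abs_bipSize_sub_bipSize_succ_le n l i
  have zero_le_abs := abs_nonneg ((bipSize n l i : ℤ) - bipSize n l (i + 1))
  omega

end bipSize

/-- adjacent crossing-centered bipyramid sizes differ by `0` or `4`. -/
theorem adjacent_bipyramid_sizes_differ_by_zero_or_four
    (n : ℕ) (hn : 2 ≤ n) (l : Fin n → ℕ)
    (hl : Set.BijOn l Set.univ (Set.Icc 1 n))
    (i : ℕ) (hi1 : 1 ≤ i) (hi2 : i ≤ n - 2) :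
    |(bipSize n l i : ℤ) - (bipSize n l (i + 1) : ℤ)| = 0 ∨
      |(bipSize n l i : ℤ) - (bipSize n l (i + 1) : ℤ)| = 4 := by
  exact adjacent_bipyramid_sizes_differ_by_zero_or_four_general n l i
    (Set.subsingleton_singleton.preimage (Set.injOn_univ.1 hl.injOn))
end

section
/- Let n ≥ 3, let l : ℤ/n → {1,…,n} be a bijection, let 1 ≤ i ≤ n−2, and let k ∈ ℤ/n be the unique index with l(k) = i+1. If both cyclic neighbors of k lie at higher levels, i.e. l(k−1) > l(k) and l(k+1) > l(k), then m_{i+1}(l) = m_i(l) + 4. -/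
/-- The rotation of `ℤ/n` by one strand, bundling `cyc` and `cycPred` so that sums over the strands
can be reindexed along it. -/
def cycEquiv (n : ℕ) : Equiv.Perm (Fin n) where
  toFun := cyc
  invFun := cycPred
  left_inv j := by
    apply Fin.ext
    simp only [cyc, cycPred]
    rw [Nat.mod_add_mod, show j.val + 1 + (n - 1) = j.val + n by omega, Nat.add_mod_right,
      Nat.mod_eq_of_lt j.isLt]
  right_inv j := by
    apply Fin.ext
    simp only [cyc, cycPred]
    rw [Nat.mod_add_mod, show j.val + (n - 1) + 1 = j.val + n by omega, Nat.add_mod_right,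
      Nat.mod_eq_of_lt j.isLt]

/-- The indicator of the event that levels `a` and `b` are separated by the gap between `i` and
`i + 1`, the condition counted by `bipSize`. It is integer-valued because its increments in `i` can
be negative. -/
def gapIndicator (i a b : ℕ) : ℤ :=
  if min a b ≤ i ∧ i + 1 ≤ max a b then 1 else 0

theorem gapIndicator_succ (i a b : ℕ) :
    gapIndicator (i + 1) a b = gapIndicator i a b +
      ((if a = i + 1 then (b - a : ℤ).sign else 0) +
        if b = i + 1 then (a - b : ℤ).sign else 0) := by
  unfold gapIndicator
  rcases lt_trichotomy a b with hab | rfl | hab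
  · rw [Int.sign_eq_one_of_pos (by omega : (0 : ℤ) < b - a),
      Int.sign_eq_neg_one_of_neg (by omega : (a - b : ℤ) < 0)]
    split_ifs <;> omega
  · simp only [sub_self, Int.sign_zero]
    split_ifs <;> omega
  · rw [Int.sign_eq_neg_one_of_neg (by omega : (b - a : ℤ) < 0),
      Int.sign_eq_one_of_pos (by omega : (0 : ℤ) < a - b)]
    split_ifs <;> omega

section BipSize

variable {n : ℕ} (l : Fin n → ℕ) (i : ℕ)

theorem bipSize_eq_two_mul_sum_gapIndicator :
    (bipSize n l i : ℤ) = 2 * ∑ j, gapIndicator i (l j) (l (cyc j)) := by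
  simp only [bipSize, gapIndicator, Nat.cast_mul, Nat.cast_ofNat, Finset.sum_boole]

theorem bipSize_succ_eq_add_sum_sign :
    (bipSize n l (i + 1) : ℤ) = bipSize n l i + 2 * ∑ k with l k = i + 1,
      ((l (cyc k) - l k : ℤ).sign + (l (cycPred k) - l k : ℤ).sign) := by
  have reindex : (∑ j, if l (cyc j) = i + 1 then (l j - l (cyc j) : ℤ).sign else 0) =
      ∑ k, if l k = i + 1 then (l (cycPred k) - l k : ℤ).sign else 0 :=
    Fintype.sum_equiv (cycEquiv n) _ _ fun j => by
      rw [show cycPred (cycEquiv n j) = j from (cycEquiv n).symm_apply_apply j]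
      rfl
  simp only [bipSize_eq_two_mul_sum_gapIndicator, gapIndicator_succ, Finset.sum_add_distrib,
    reindex, Finset.sum_filter, mul_add]

variable {l i}

theorem bipyramid_size_rise_of_local_min_general
    (hmin : ∀ k, l k = i + 1 → l k < l (cycPred k) ∧ l k < l (cyc k)) :
    bipSize n l (i + 1) = bipSize n l i + 4 * (Finset.univ.filter fun k => l k = i + 1).card := by
  have sign_sum : ∀ k ∈ Finset.univ.filter fun k => l k = i + 1,
      (l (cyc k) - l k : ℤ).sign + (l (cycPred k) - l k : ℤ).sign = 2 := fun k hk => by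
    obtain ⟨hprev, hnext⟩ := hmin k (Finset.mem_filter.mp hk).2
    rw [Int.sign_eq_one_of_pos (by omega), Int.sign_eq_one_of_pos (by omega), one_add_one_eq_two]
  have rise := bipSize_succ_eq_add_sum_sign l i
  rw [Finset.sum_congr rfl sign_sum, Finset.sum_const, nsmul_eq_mul] at rise
  omega

end BipSize

/-- if both cyclic neighbors of the strand at level `i+1` lie at higher
levels, then `m_{i+1}(l) = m_i(l) + 4`. -/
theorem bipyramid_size_rise_of_local_min
    (n : ℕ) (hn : 3 ≤ n) (l : Fin n → ℕ)
    (hl : Set.BijOn l Set.univ (Set.Icc 1 n))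
    (i : ℕ) (hi1 : 1 ≤ i) (hi2 : i ≤ n - 2)
    (k : Fin n) (hk : l k = i + 1)
    (hprev : l k < l (cycPred k)) (hnext : l k < l (cyc k)) :
    bipSize n l (i + 1) = bipSize n l i + 4 := by
  have level_iff (j : Fin n) : l j = i + 1 ↔ j = k := by rw [← hk, hl.injOn.eq_iff trivial trivial]
  have rise := bipyramid_size_rise_of_local_min_general (l := l) (i := i)
    fun j hj => (level_iff j).mp hj ▸ ⟨hprev, hnext⟩
  simpa only [level_iff, Finset.filter_eq', Finset.mem_univ, if_true, Finset.card_singleton,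
    mul_one] using rise
end

section
/- Let n ≥ 3, let l : ℤ/n → {1,…,n} be a bijection, let 1 ≤ i ≤ n−2, and let k ∈ ℤ/n be the unique index with l(k) = i+1. If the cyclic neighbors of k lie on opposite sides, i.e. either l(k−1) < l(k) < l(k+1) or l(k−1) > l(k) > l(k+1), then m_i(l) = m_{i+1}(l). -/
/-!
The number `m_i / 2` counts the steps `j → j + 1` on which `l` crosses the height `i + 1/2`.
Raising the height past the level `c = i + 1` loses exactly the steps joining a strand at level `c`
to a lower neighbour and gains exactly those joining it to a higher neighbour. If every strand at
level `c` has one neighbour on each side, the losses and gains balance.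
-/

/-- The cyclic successor as a permutation of the strands, with inverse the cyclic predecessor. -/
def cycPerm (n : ℕ) : Equiv.Perm (Fin n) where
  toFun := cyc
  invFun := cycPred
  left_inv j := by
    apply Fin.ext
    have succ_add_pred : j.val + 1 + (n - 1) = j.val + n := by omega
    simp only [cyc, cycPred, Nat.mod_add_mod, succ_add_pred, Nat.add_mod_right,
      Nat.mod_eq_of_lt j.isLt]
  right_inv j := by
    apply Fin.ext
    have pred_add_succ : j.val + (n - 1) + 1 = j.val + n := by omega
    simp only [cyc, cycPred, Nat.mod_add_mod, pred_add_succ, Nat.add_mod_right,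
      Nat.mod_eq_of_lt j.isLt]

theorem card_filter_rel_perm_apply {α : Type*} [Fintype α] (σ : Equiv.Perm α)
    (r : α → α → Prop) [DecidableRel r] :
    Finset.card {j | r (σ j) j} = Finset.card {k | r k (σ.symm k)} :=
  Finset.card_equiv σ fun j => by
    simp only [Finset.mem_filter, Finset.mem_univ, true_and, Equiv.symm_apply_apply]

section LevelCrossings

variable {α β : Type*} [Fintype α] [LinearOrder β] (σ : Equiv.Perm α) (l : α → β) (c : β)

/-- The steps `j → σ j` on which `l` crosses the cut just below `c`, which separates the levels
`< c` from the levels `≥ c`; a step is encoded by its source. -/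
def crossingsBelow : Finset α :=
  {j | min (l j) (l (σ j)) < c ∧ c ≤ max (l j) (l (σ j))}

/-- The steps `j → σ j` on which `l` crosses the cut just above `c`, which separates the levels
`≤ c` from the levels `> c`; a step is encoded by its source. -/
def crossingsAbove : Finset α :=
  {j | min (l j) (l (σ j)) ≤ c ∧ c < max (l j) (l (σ j))}

theorem card_crossingsBelow_add_card_higher_neighbors :
    (crossingsBelow σ l c).card +
        (Finset.card {k | l k = c ∧ c < l (σ k)} + Finset.card {k | l k = c ∧ c < l (σ.symm k)}) =
      (crossingsAbove σ l c).card +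
        (Finset.card {k | l k = c ∧ l (σ k) < c} +
          Finset.card {k | l k = c ∧ l (σ.symm k) < c}) := by
  -- Once predecessor pairs are indexed by their source, the identity holds step by step.
  rw [← card_filter_rel_perm_apply σ fun k j => l k = c ∧ c < l j,
    ← card_filter_rel_perm_apply σ fun k j => l k = c ∧ l j < c]
  simp only [crossingsBelow, crossingsAbove, Finset.card_filter, ← Finset.sum_add_distrib]
  refine Finset.sum_congr rfl fun j _ => ?_
  rcases lt_trichotomy (l j) c with hj | hj | hj <;>
    rcases lt_trichotomy (l (σ j)) c with hσj | hσj | hσj <;>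
    simp [*, LT.lt.le, LT.lt.ne, LT.lt.ne', LT.lt.not_gt]

variable {σ l c}

theorem card_crossingsBelow_eq_card_crossingsAbove
    (h : ∀ k, l k = c →
      (l (σ.symm k) < l k ∧ l k < l (σ k)) ∨ (l (σ k) < l k ∧ l k < l (σ.symm k))) :
    (crossingsBelow σ l c).card = (crossingsAbove σ l c).card := by
  have next_higher_iff_prev_lower :
      ∀ k, (l k = c ∧ c < l (σ k)) ↔ (l k = c ∧ l (σ.symm k) < c) := by
    grind
  have prev_higher_iff_next_lower :
      ∀ k, (l k = c ∧ c < l (σ.symm k)) ↔ (l k = c ∧ l (σ k) < c) := by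
    grind
  have balance := card_crossingsBelow_add_card_higher_neighbors σ l c
  simp only [next_higher_iff_prev_lower, prev_higher_iff_next_lower] at balance
  omega

end LevelCrossings

theorem bipSize_eq_two_mul_card_crossingsBelow (n : ℕ) (l : Fin n → ℕ) (i : ℕ) :
    bipSize n l i = 2 * (crossingsBelow (cycPerm n) l (i + 1)).card := by
  simp only [bipSize, crossingsBelow, Nat.lt_succ_iff]
  rfl

theorem bipSize_eq_two_mul_card_crossingsAbove (n : ℕ) (l : Fin n → ℕ) (i : ℕ) :
    bipSize n l i = 2 * (crossingsAbove (cycPerm n) l i).card :=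
  rfl

theorem bipyramid_size_eq_of_monotone_through_general
    (n : ℕ) (l : Fin n → ℕ) (i : ℕ)
    (hmono : ∀ k, l k = i + 1 →
      (l (cycPred k) < l k ∧ l k < l (cyc k)) ∨ (l (cyc k) < l k ∧ l k < l (cycPred k))) :
    bipSize n l i = bipSize n l (i + 1) := by
  rw [bipSize_eq_two_mul_card_crossingsBelow, bipSize_eq_two_mul_card_crossingsAbove,
    card_crossingsBelow_eq_card_crossingsAbove (σ := cycPerm n) hmono]

/-- if the cyclic neighbors of the strand at level `i+1` lie on opposite
sides, then `m_i(l) = m_{i+1}(l)`. -/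
theorem bipyramid_size_eq_of_monotone_through
    (n : ℕ) (hn : 3 ≤ n) (l : Fin n → ℕ)
    (hl : Set.BijOn l Set.univ (Set.Icc 1 n))
    (i : ℕ) (hi1 : 1 ≤ i) (hi2 : i ≤ n - 2)
    (k : Fin n) (hk : l k = i + 1)
    (hmono : (l (cycPred k) < l k ∧ l k < l (cyc k)) ∨
             (l (cyc k) < l k ∧ l k < l (cycPred k))) :
    bipSize n l i = bipSize n l (i + 1) := by
  refine bipyramid_size_eq_of_monotone_through_general n l i fun k' hk' => ?_
  obtain rfl : k' = k := hl.injOn (Set.mem_univ k') (Set.mem_univ k) (hk'.trans hk.symm)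
  exact hmono
end

section
/- (Lemma on extending realized sequences.) Let n ≥ 2 and suppose the sequence (m_1, m_2, …, m_{n−1}) of positive integers is realized as the size signature of some n-crossing, i.e. there is a bijection l : ℤ/n → {1,…,n} with m_i(l) = m_i for all 1 ≤ i ≤ n−1. Then the sequence (4, m_1+4, m_2+4, …, m_{n−1}+4, 4) of length n+1 is realized as the size signature of some (n+2)-crossing, i.e. there is a bijection l' : ℤ/(n+2) → {1,…,n+2} whose size signature is (4, m_1+4, …, m_{n−1}+4, 4). -/
/-!
For a threshold `t`, `bipSize n l t` is twice the number of cyclically consecutive strands lying on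
opposite sides of `t`. Shift all levels up by one, which frees the levels `1` and `n + 2`, and place
two new strands at these levels between the last and the first strand. The edge from the last strand
to the first becomes a detour through both extreme levels; every threshold between them is crossed
by the middle edge, and if the extreme levels are visited in the right order, exactly one more time
than the old edge by the two outer ones together. Hence all sizes grow by `4`, including those at
`t = 0` and `t = n`, which vanish for the original crossing and become the two new entries.
-/

/-- The contribution of two cyclically consecutive strands at levels `a` and `b` to the size of the
`t`-th bipyramid: `1` if the threshold `t` separates `a` from `b`, and `0` otherwise. -/
def straddle (a b t : ℕ) : ℕ :=
  if min a b ≤ t ∧ t + 1 ≤ max a b then 1 else 0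

theorem straddle_comm (a b t : ℕ) : straddle a b t = straddle b a t := by
  simp only [straddle, min_comm, max_comm]

theorem straddle_add_one (a b t : ℕ) : straddle (a + 1) (b + 1) (t + 1) = straddle a b t :=
  if_congr (by omega) rfl rfl

theorem straddle_detour_of_le {a b lo hi t : ℕ} (hab : a ≤ b) (hlo : lo ≤ t) (hhi : t < hi) :
    straddle a hi t + straddle hi lo t + straddle lo b t = straddle a b t + 2 := by
  unfold straddle
  split_ifs <;> omega

theorem straddle_detour_of_ge {a b lo hi t : ℕ} (hba : b ≤ a) (hlo : lo ≤ t) (hhi : t < hi) :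
    straddle a lo t + straddle lo hi t + straddle hi b t = straddle a b t + 2 := by
  have reversed := straddle_detour_of_le hba hlo hhi
  rw [straddle_comm a lo, straddle_comm lo hi, straddle_comm hi b, straddle_comm a b]
  omega

theorem cyc_castSucc {k : ℕ} (j : Fin k) : cyc j.castSucc = j.succ :=
  Fin.ext (Nat.mod_eq_of_lt (by simp))

theorem cyc_last (k : ℕ) : cyc (Fin.last k) = 0 :=
  Fin.ext (Nat.mod_self _)

theorem bipSize_eq_two_mul_sum (n : ℕ) (l : Fin n → ℕ) (t : ℕ) :
    bipSize n l t = 2 * ∑ j, straddle (l j) (l (cyc j)) t := by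
  simp only [bipSize, straddle, Finset.card_filter]

theorem bipSize_succ (k : ℕ) (l : Fin (k + 1) → ℕ) (t : ℕ) :
    bipSize (k + 1) l t =
      2 * (∑ j : Fin k, straddle (l j.castSucc) (l j.succ) t
        + straddle (l (Fin.last k)) (l 0) t) := by
  simp only [bipSize_eq_two_mul_sum, Fin.sum_univ_castSucc, cyc_castSucc, cyc_last]

theorem bipSize_add_one (n : ℕ) (l : Fin n → ℕ) (t : ℕ) :
    bipSize n (fun j => l j + 1) (t + 1) = bipSize n l t := by
  simp only [bipSize_eq_two_mul_sum, straddle_add_one]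

theorem bipSize_eq_zero_of_forall_lt {n : ℕ} {l : Fin n → ℕ} {t : ℕ} (h : ∀ j, t < l j) :
    bipSize n l t = 0 := by
  have no_straddle (j : Fin n) : straddle (l j) (l (cyc j)) t = 0 :=
    if_neg fun hj => (lt_min (h j) (h (cyc j))).not_ge hj.1
  simp only [bipSize_eq_two_mul_sum, no_straddle, Finset.sum_const_zero, mul_zero]

theorem bipSize_eq_zero_of_forall_le {n : ℕ} {l : Fin n → ℕ} {t : ℕ} (h : ∀ j, l j ≤ t) :
    bipSize n l t = 0 := by
  have no_straddle (j : Fin n) : straddle (l j) (l (cyc j)) t = 0 :=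
    if_neg fun hj => (max_le (h j) (h (cyc j))).not_gt hj.2
  simp only [bipSize_eq_two_mul_sum, no_straddle, Finset.sum_const_zero, mul_zero]

theorem bipSize_vecCons (k : ℕ) (l : Fin (k + 1) → ℕ) (x t : ℕ) :
    bipSize (k + 2) (Matrix.vecCons x l) t + 2 * straddle (l (Fin.last k)) (l 0) t =
      bipSize (k + 1) l t + 2 * (straddle (l (Fin.last k)) x t + straddle x (l 0) t) := by
  simp only [bipSize_succ, Fin.sum_univ_succ, Fin.castSucc_zero, ← Fin.succ_castSucc,
    ← Fin.succ_last, Matrix.cons_val_zero, Matrix.cons_val_succ]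
  ring

theorem bipSize_vecCons_vecCons {k : ℕ} {l : Fin (k + 1) → ℕ} {x y t : ℕ}
    (detour : straddle (l (Fin.last k)) x t + straddle x y t + straddle y (l 0) t =
      straddle (l (Fin.last k)) (l 0) t + 2) :
    bipSize (k + 3) (Matrix.vecCons x (Matrix.vecCons y l)) t = bipSize (k + 1) l t + 4 := by
  have insert_y := bipSize_vecCons k l y t
  have insert_x : bipSize (k + 3) (Matrix.vecCons x (Matrix.vecCons y l)) t
        + 2 * straddle (l (Fin.last k)) y t =
      bipSize (k + 2) (Matrix.vecCons y l) t
        + 2 * (straddle (l (Fin.last k)) x t + straddle x y t) :=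
    bipSize_vecCons (k + 1) (Matrix.vecCons y l) x t
  omega

theorem exists_bipSize_vecCons_vecCons (k : ℕ) (l : Fin (k + 1) → ℕ) (lo hi : ℕ) :
    ∃ x y, (x = lo ∧ y = hi ∨ x = hi ∧ y = lo) ∧ ∀ t, lo ≤ t → t < hi →
      bipSize (k + 3) (Matrix.vecCons x (Matrix.vecCons y l)) t = bipSize (k + 1) l t + 4 := by
  rcases le_total (l (Fin.last k)) (l 0) with hle | hge
  · exact ⟨hi, lo, .inr ⟨rfl, rfl⟩, fun t hlo hhi =>
      bipSize_vecCons_vecCons (straddle_detour_of_le hle hlo hhi)⟩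
  · exact ⟨lo, hi, .inl ⟨rfl, rfl⟩, fun t hlo hhi =>
      bipSize_vecCons_vecCons (straddle_detour_of_ge hge hlo hhi)⟩

theorem bijOn_univ_vecCons {α : Type*} {n : ℕ} {f : Fin n → α} {s : Set α} {a : α}
    (hf : Set.BijOn f Set.univ s) (ha : a ∉ s) :
    Set.BijOn (Matrix.vecCons a f) Set.univ (insert a s) := by
  have range_f : Set.range f = s := Set.image_univ ▸ hf.image_eq
  have injective : Function.Injective (Matrix.vecCons a f) :=
    Fin.cons_injective_iff.2 ⟨range_f ▸ ha, Set.injOn_univ.1 hf.injOn⟩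
  have image : Matrix.vecCons a f '' Set.univ = insert a s := by
    rw [Set.image_univ, Matrix.range_cons, range_f, Set.singleton_union]
  exact image ▸ injective.injOn.bijOn_image

theorem bijOn_vecCons_vecCons_add_one {n : ℕ} {l : Fin n → ℕ} {x y : ℕ}
    (hl : Set.BijOn l Set.univ (Set.Icc 1 n)) (hxy : x = 1 ∧ y = n + 2 ∨ x = n + 2 ∧ y = 1) :
    Set.BijOn (Matrix.vecCons x (Matrix.vecCons y fun j => l j + 1)) Set.univ
      (Set.Icc 1 (n + 2)) := by
  have shift : Set.BijOn (· + 1) (Set.Icc 1 n) (Set.Icc 2 (n + 1)) := by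
    simpa only [Set.image_add_const_Icc] using
      ((add_left_injective 1).injOn (s := Set.Icc 1 n)).bijOn_image
  have levels : Set.Icc 1 (n + 2) = insert x (insert y (Set.Icc 2 (n + 1))) := by
    ext v
    simp only [Set.mem_insert_iff, Set.mem_Icc]
    omega
  rw [levels]
  refine bijOn_univ_vecCons (bijOn_univ_vecCons (shift.comp hl) ?_) ?_ <;>
    simp only [Set.mem_insert_iff, Set.mem_Icc] <;> omega

theorem exists_bijOn_bipSize_add_four {k : ℕ} {l : Fin (k + 1) → ℕ}
    (hl : Set.BijOn l Set.univ (Set.Icc 1 (k + 1))) :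
    ∃ l' : Fin (k + 3) → ℕ, Set.BijOn l' Set.univ (Set.Icc 1 (k + 3)) ∧
      ∀ t ≤ k + 1, bipSize (k + 3) l' (t + 1) = bipSize (k + 1) l t + 4 := by
  obtain ⟨x, y, hxy, size⟩ := exists_bipSize_vecCons_vecCons k (fun j => l j + 1) 1 (k + 3)
  refine ⟨_, bijOn_vecCons_vecCons_add_one hl hxy, fun t ht => ?_⟩
  rw [size (t + 1) (by omega) (by omega), bipSize_add_one]

/-- Lemma on extending realized sequences: if `(m_1, …, m_{n-1})` is
realized as the size signature of some `n`-crossing, then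
`(4, m_1 + 4, …, m_{n-1} + 4, 4)` is realized as the size signature of some
`(n+2)`-crossing. -/
theorem realized_extend_add_four
    (n : ℕ) (hn : 2 ≤ n) (m : ℕ → ℕ)
    (hpos : ∀ i, 1 ≤ i → i ≤ n - 1 → 0 < m i)
    (l : Fin n → ℕ) (hl : Set.BijOn l Set.univ (Set.Icc 1 n))
    (hsig : ∀ i, 1 ≤ i → i ≤ n - 1 → bipSize n l i = m i) :
    ∃ l' : Fin (n + 2) → ℕ, Set.BijOn l' Set.univ (Set.Icc 1 (n + 2)) ∧
      bipSize (n + 2) l' 1 = 4 ∧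
      bipSize (n + 2) l' (n + 1) = 4 ∧
      ∀ i, 1 ≤ i → i ≤ n - 1 → bipSize (n + 2) l' (i + 1) = m i + 4 := by
  obtain ⟨k, rfl⟩ : ∃ k, n = k + 1 := Nat.exists_eq_add_one.2 (by omega)
  have level_mem (j : Fin (k + 1)) : l j ∈ Set.Icc 1 (k + 1) := hl.mapsTo (Set.mem_univ j)
  have bottom : bipSize (k + 1) l 0 = 0 := bipSize_eq_zero_of_forall_lt fun j => (level_mem j).1
  have top : bipSize (k + 1) l (k + 1) = 0 := bipSize_eq_zero_of_forall_le fun j => (level_mem j).2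
  obtain ⟨l', hl', size⟩ := exists_bijOn_bipSize_add_four hl
  refine ⟨l', hl', ?_, ?_, fun i hi hik => ?_⟩
  · rw [size 0 (Nat.zero_le _), bottom]
  · rw [size (k + 1) le_rfl, top]
  · rw [size i (by omega), hsig i hi hik]
end

section
/- (Concatenation lemma.) Let u, v ≥ 2 and suppose the sequences (p_1, p_2, …, p_{u−1}) and (q_1, q_2, …, q_{v−1}) of positive integers are each realized as the size signature of a u-crossing and a v-crossing respectively, where p_1 = p_{u−1} = q_1 = q_{v−1} = 4. Then the concatenated sequence (p_1, p_2, …, p_{u−1}, q_2, …, q_{v−1}) of length u+v−3 is realized as the size signature of some (u+v−2)-crossing. -/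
/-!
Read the levels of a crossing cyclically and mark each strand by whether its level is at most `i`.
Half the size of the `i`-th bipyramid is the number of cyclically consecutive strands with
different marks, which depends neither on the starting strand nor on how often a mark is repeated.

Cut the `u`-crossing at its top strand and the `v`-crossing at its bottom strand, raise the levels
of the second by `a = u - 2`, and concatenate the remaining words. For `i < u` the second word has
constant marks and counts as the removed top strand; for `u ≤ i` the first word has constant marks
and counts as the removed bottom strand.
-/

open List

section CyclicChanges

variable {α : Type*} [DecidableEq α]

/-- The number of cyclically consecutive pairs of distinct letters in the cyclic word `w`, where
the last letter is followed by the first. -/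
def cyclicChanges (w : List α) : ℕ :=
  (zipWith (· != ·) w (w.rotate 1)).count true

theorem cyclicChanges_rotate (w : List α) (k : ℕ) :
    cyclicChanges (w.rotate k) = cyclicChanges w := by
  have hzip : zipWith (· != ·) (w.rotate k) ((w.rotate k).rotate 1) =
      (zipWith (· != ·) w (w.rotate 1)).rotate k := by
    rw [zipWith_rotate_distrib _ _ _ _ (length_rotate w 1).symm, rotate_rotate, rotate_rotate,
      add_comm]
  rw [cyclicChanges, hzip, (rotate_perm _ k).count_eq, cyclicChanges]

theorem cyclicChanges_eq_of_isRotated {w w' : List α} (h : w ~r w') :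
    cyclicChanges w = cyclicChanges w' := by
  obtain ⟨k, rfl⟩ := h
  exact (cyclicChanges_rotate w k).symm

theorem cyclicChanges_cons_cons_self (a : α) (w : List α) :
    cyclicChanges (a :: a :: w) = cyclicChanges (a :: w) := by
  simp [cyclicChanges]

theorem cyclicChanges_constant_append {a : α} {c : List α} (hc : ∀ x ∈ c, x = a) (hne : c ≠ [])
    (w : List α) : cyclicChanges (c ++ w) = cyclicChanges (a :: w) := by
  induction c with
  | nil => exact absurd rfl hne
  | cons x c ih =>
    obtain ⟨rfl, hc⟩ := forall_mem_cons.1 hc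
    cases c with
    | nil => rfl
    | cons y c =>
      obtain rfl := hc y mem_cons_self
      rw [cons_append, cons_append, cyclicChanges_cons_cons_self]
      exact ih hc (cons_ne_nil _ _)

end CyclicChanges

section WordSize

/-- The size of the `i`-th crossing-centered bipyramid of the crossing whose levels, read in
cyclic order from any strand, form the word `w`. -/
def wordSize (w : List ℕ) (i : ℕ) : ℕ :=
  2 * cyclicChanges (w.map fun x => decide (x ≤ i))

theorem wordSize_eq_of_isRotated {w w' : List ℕ} (h : w ~r w') (i : ℕ) :
    wordSize w i = wordSize w' i :=
  congrArg (2 * ·) (cyclicChanges_eq_of_isRotated (h.map _))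

theorem wordSize_map_add (a i : ℕ) (w : List ℕ) :
    wordSize (w.map (a + ·)) (a + i) = wordSize w i := by
  simp [wordSize, Function.comp_def]

theorem wordSize_append_of_forall_le {i t : ℕ} {c : List ℕ} (ht : t ≤ i) (hc : ∀ x ∈ c, x ≤ i)
    (hne : c ≠ []) (w : List ℕ) : wordSize (c ++ w) i = wordSize (t :: w) i := by
  have hmark : ∀ b ∈ c.map fun x => decide (x ≤ i), b = decide (t ≤ i) := by
    simpa [ht] using hc
  rw [wordSize, map_append, cyclicChanges_constant_append hmark (by simpa using hne), wordSize,
    map_cons]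

theorem wordSize_append_of_forall_lt {i t : ℕ} {c : List ℕ} (ht : i < t) (hc : ∀ x ∈ c, i < x)
    (hne : c ≠ []) (w : List ℕ) : wordSize (w ++ c) i = wordSize (t :: w) i := by
  have hmark : ∀ b ∈ c.map fun x => decide (x ≤ i), b = decide (t ≤ i) := by
    simpa [ht.not_ge] using hc
  rw [wordSize_eq_of_isRotated isRotated_append, wordSize, map_append,
    cyclicChanges_constant_append hmark (by simpa using hne), wordSize, map_cons]

end WordSize

section LevelFunction

variable {n : ℕ}

theorem ofFn_rotate_one {α : Type*} (f : Fin n → α) :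
    (ofFn f).rotate 1 = ofFn fun j => f (cyc j) := by
  refine ext_getElem (by simp) fun k _ _ => ?_
  simp [getElem_rotate, cyc]

theorem zipWith_ofFn {α β γ : Type*} (g : α → β → γ) (f : Fin n → α) (f' : Fin n → β) :
    zipWith g (ofFn f) (ofFn f') = ofFn fun j => g (f j) (f' j) :=
  ext_getElem (by simp) fun k _ _ => by simp

theorem count_ofFn {α : Type*} [DecidableEq α] (f : Fin n → α) (a : α) :
    (ofFn f).count a = (Finset.univ.filter fun j => f j = a).card := by
  simp only [← Multiset.coe_count, ← Fin.univ_val_map, Multiset.count_map, eq_comm (a := a)]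
  rfl

theorem cyclicChanges_ofFn {α : Type*} [DecidableEq α] (f : Fin n → α) :
    cyclicChanges (ofFn f) = (Finset.univ.filter fun j => f j ≠ f (cyc j)).card := by
  simp only [cyclicChanges, ofFn_rotate_one, zipWith_ofFn, count_ofFn, bne_iff_ne]

theorem min_le_and_succ_le_max_iff {x y i : ℕ} :
    min x y ≤ i ∧ i + 1 ≤ max x y ↔ decide (x ≤ i) ≠ decide (y ≤ i) := by
  grind

theorem bipSize_eq_wordSize_ofFn (l : Fin n → ℕ) (i : ℕ) :
    bipSize n l i = wordSize (ofFn l) i := by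
  rw [bipSize, wordSize, map_ofFn, cyclicChanges_ofFn]
  simp only [min_le_and_succ_le_max_iff, Function.comp_apply]

theorem bijOn_Icc_iff_ofFn_perm_range' {l : Fin n → ℕ} :
    Set.BijOn l Set.univ (Set.Icc 1 n) ↔ ofFn l ~ range' 1 n := by
  have hmem : (∀ x, x ∈ ofFn l ↔ x ∈ range' 1 n) ↔ Set.range l = Set.Icc 1 n := by
    simp [Set.ext_iff, Nat.lt_one_add_iff]
  constructor
  · intro hl
    refine (perm_ext_iff_of_nodup (nodup_ofFn.2 (Set.injOn_univ.1 hl.injOn)) nodup_range').2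
      (hmem.2 ?_)
    rw [← Set.image_univ, hl.image_eq]
  · intro hl
    rw [← hmem.1 fun x => hl.mem_iff, ← Set.image_univ]
    exact (nodup_ofFn.1 (hl.nodup_iff.2 nodup_range')).injOn.bijOn_image

end LevelFunction

theorem exists_isRotated_cons_of_mem {α : Type*} {a : α} {w : List α} (h : a ∈ w) :
    ∃ r, w ~r a :: r := by
  obtain ⟨s, t, rfl⟩ := append_of_mem h
  exact ⟨t ++ s, isRotated_append⟩

section Concatenation

variable {a b : ℕ} {w w' : List ℕ}

theorem perm_range'_of_top_cons (hw : (a + 1) :: w ~ range' 1 (a + 1)) : w ~ range' 1 a := by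
  rw [range'_1_concat, add_comm 1 a] at hw
  exact (hw.trans (perm_append_singleton _ _)).cons_inv

theorem map_add_perm_range'_of_bottom_cons (hw' : 1 :: w' ~ range' 1 (b + 1)) :
    w'.map (a + ·) ~ range' (a + 2) b := by
  rw [range'_succ, perm_cons] at hw'
  simpa [map_add_range'] using hw'.map (a + ·)

theorem append_map_add_perm_range' (hw : (a + 2) :: w ~ range' 1 (a + 2))
    (hw' : 1 :: w' ~ range' 1 (b + 2)) : w ++ w'.map (a + ·) ~ range' 1 (a + b + 2) := by
  have hsplit : range' 1 (a + 1) ++ range' (a + 2) (b + 1) = range' 1 (a + b + 2) := by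
    rw [show a + 2 = 1 + (a + 1) by omega, range'_append_1]
    congr 1
    omega
  exact hsplit ▸ (perm_range'_of_top_cons hw).append (map_add_perm_range'_of_bottom_cons hw')

theorem wordSize_append_map_add_of_lt (hw' : 1 :: w' ~ range' 1 (b + 2)) {i : ℕ}
    (hi : i < a + 2) : wordSize (w ++ w'.map (a + ·)) i = wordSize ((a + 2) :: w) i := by
  have hperm : w'.map (a + ·) ~ range' (a + 2) (b + 1) := map_add_perm_range'_of_bottom_cons hw'
  refine wordSize_append_of_forall_lt hi (fun x hx => ?_) (fun hnil => ?_) w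
  · have := mem_range'_1.1 (hperm.mem_iff.1 hx)
    omega
  · simp [hnil] at hperm

theorem wordSize_append_map_add_of_le (hw : (a + 2) :: w ~ range' 1 (a + 2)) {k : ℕ}
    (hk : 2 ≤ k) : wordSize (w ++ w'.map (a + ·)) (a + k) = wordSize (1 :: w') k := by
  have hperm : w ~ range' 1 (a + 1) := perm_range'_of_top_cons hw
  have hle : ∀ x ∈ w, x ≤ a + k := fun x hx => by
    have := mem_range'_1.1 (hperm.mem_iff.1 hx)
    omega
  have hne : w ≠ [] := by
    rintro rfl
    simp at hperm
  calc wordSize (w ++ w'.map (a + ·)) (a + k)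
      = wordSize ((a + 1) :: w'.map (a + ·)) (a + k) :=
        wordSize_append_of_forall_le (by omega) hle hne _
    _ = wordSize (1 :: w') k := wordSize_map_add a k (1 :: w')

theorem exists_bipSize_concatenate {lp : Fin (a + 2) → ℕ} {lq : Fin (b + 2) → ℕ}
    (hlp : Set.BijOn lp Set.univ (Set.Icc 1 (a + 2)))
    (hlq : Set.BijOn lq Set.univ (Set.Icc 1 (b + 2))) :
    ∃ l : Fin (a + b + 2) → ℕ, Set.BijOn l Set.univ (Set.Icc 1 (a + b + 2)) ∧
      (∀ i < a + 2, bipSize (a + b + 2) l i = bipSize (a + 2) lp i) ∧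
      ∀ k, 2 ≤ k → bipSize (a + b + 2) l (a + k) = bipSize (b + 2) lq k := by
  rw [bijOn_Icc_iff_ofFn_perm_range'] at hlp hlq
  simp only [bijOn_Icc_iff_ofFn_perm_range', bipSize_eq_wordSize_ofFn]
  obtain ⟨w, hw⟩ : ∃ w, ofFn lp ~r (a + 2) :: w :=
    exists_isRotated_cons_of_mem (hlp.mem_iff.2 (by simp))
  obtain ⟨w', hw'⟩ : ∃ w', ofFn lq ~r 1 :: w' :=
    exists_isRotated_cons_of_mem (hlq.mem_iff.2 (by simp))
  have hwp := hw.perm.symm.trans hlp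
  have hwq := hw'.perm.symm.trans hlq
  have hperm := append_map_add_perm_range' hwp hwq
  obtain ⟨l, hl⟩ : ∃ l : Fin (a + b + 2) → ℕ, ofFn l = w ++ w'.map (a + ·) := by
    rw [← length_range' (s := 1) (n := a + b + 2) (step := 1), ← hperm.length_eq]
    exact ⟨_, ofFn_get _⟩
  rw [← hl] at hperm
  refine ⟨l, hperm, fun i hi => ?_, fun k hk => ?_⟩
  · rw [hl, wordSize_append_map_add_of_lt hwq hi, wordSize_eq_of_isRotated hw]
  · rw [hl, wordSize_append_map_add_of_le hwp hk, wordSize_eq_of_isRotated hw']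

end Concatenation

/-- Concatenation lemma: if `(p_1, …, p_{u-1})` and `(q_1, …, q_{v-1})`
are realized size signatures with `p_1 = p_{u-1} = q_1 = q_{v-1} = 4`, then the
concatenation `(p_1, …, p_{u-1}, q_2, …, q_{v-1})` is realized as the size signature of
some `(u+v-2)`-crossing. -/
theorem realized_concatenate
    (u v : ℕ) (hu : 2 ≤ u) (hv : 2 ≤ v) (p q : ℕ → ℕ)
    (hppos : ∀ i, 1 ≤ i → i ≤ u - 1 → 0 < p i)
    (hqpos : ∀ i, 1 ≤ i → i ≤ v - 1 → 0 < q i)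
    (hp1 : p 1 = 4) (hpend : p (u - 1) = 4)
    (hq1 : q 1 = 4) (hqend : q (v - 1) = 4)
    (lp : Fin u → ℕ) (hlp : Set.BijOn lp Set.univ (Set.Icc 1 u))
    (hsp : ∀ i, 1 ≤ i → i ≤ u - 1 → bipSize u lp i = p i)
    (lq : Fin v → ℕ) (hlq : Set.BijOn lq Set.univ (Set.Icc 1 v))
    (hsq : ∀ i, 1 ≤ i → i ≤ v - 1 → bipSize v lq i = q i) :
    ∃ l : Fin (u + v - 2) → ℕ, Set.BijOn l Set.univ (Set.Icc 1 (u + v - 2)) ∧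
      (∀ i, 1 ≤ i → i ≤ u - 1 → bipSize (u + v - 2) l i = p i) ∧
      (∀ i, u ≤ i → i ≤ u + v - 3 → bipSize (u + v - 2) l i = q (i - u + 2)) := by
  obtain ⟨a, rfl⟩ := Nat.exists_eq_add_of_le' hu
  obtain ⟨b, rfl⟩ := Nat.exists_eq_add_of_le' hv
  obtain ⟨l, hl, hlow, hhigh⟩ := exists_bipSize_concatenate hlp hlq
  rw [show a + 2 + (b + 2) - 2 = a + b + 2 by omega]
  refine ⟨l, hl, fun i hi hiu => ?_, fun i hui hi => ?_⟩
  · rw [hlow i (by omega), hsp i hi hiu]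
  · obtain ⟨k, rfl⟩ := Nat.exists_eq_add_of_le (show a ≤ i by omega)
    rw [hhigh k (by omega), hsq k (by omega) (by omega)]
    congr 1
    omega
end

section
/- (Realization theorem for bipyramid size signatures.) Let n ≥ 2 and let (m_1, m_2, …, m_{n−1}) be any sequence of positive integers such that m_1 = m_{n−1} = 4 and |m_i − m_{i+1}| = 0 or 4 for every 1 ≤ i ≤ n−2. Then this sequence is realized as the size signature of some n-crossing: there exists a bijection l : ℤ/n → {1,…,n} with m_i(l) = m_i for all 1 ≤ i ≤ n−1. -/
/-!
Dividing the signature by `4` gives a path with steps `1`, `0`, `-1` that is positive strictly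
between its two zero endpoints. A strand which is a local minimum of the level function adds `4`
to every bipyramid above it, a local maximum adds `-4`, and any other strand adds `0`. So it
suffices to arrange the levels cyclically so that up-steps sit at local minima, down-steps at local
maxima and flat steps at neither. With `h` up-steps `u`, `h` down-steps `d` and `c` flat steps `z`,
each listed in increasing order, the arrangement
`u₀ d₀ u₁ d₁ … u_{h-1} d_{h-1} z_{c-1} … z₁ z₀` works: positivity of the path forces
`u_{a+1} < d_a` for all `a`.
-/

section Turning

variable {n : ℕ}

theorem leftInverse_cycPred_cyc : Function.LeftInverse (cycPred (n := n)) cyc := by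
  intro j
  apply Fin.ext
  change ((j.val + 1) % n + (n - 1)) % n = j.val
  have hsum : j.val + 1 + (n - 1) = j.val + n := by omega
  rw [Nat.mod_add_mod, hsum, Nat.add_mod_right, Nat.mod_eq_of_lt j.isLt]

theorem cyc_bijective : Function.Bijective (cyc (n := n)) :=
  leftInverse_cycPred_cyc.injective.bijective_of_finite

/-- The turning of the level function `l` at the strand `j`: it is `2` at a strict local minimum
of `l`, `-2` at a strict local maximum, and `0` where `l` is strictly monotone. -/
def turning (l : Fin n → ℕ) (j : Fin n) : ℤ :=
  Int.sign (l (cyc j) - l j) + Int.sign (l (cycPred j) - l j)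

theorem ite_separates_eq_add_sign (a b i : ℕ) :
    (if min a b ≤ i ∧ i + 1 ≤ max a b then (1 : ℤ) else 0) =
      (if a ≤ i then Int.sign (b - a) else 0) + (if b ≤ i then Int.sign (a - b) else 0) := by
  rcases lt_trichotomy a b with hab | rfl | hba
  · rw [Int.sign_eq_one_of_pos (by omega), Int.sign_eq_neg_one_of_neg (by omega)]
    split_ifs <;> omega
  · simp
  · rw [Int.sign_eq_neg_one_of_neg (by omega), Int.sign_eq_one_of_pos (by omega)]
    split_ifs <;> omega

theorem bipSize_eq_two_mul_sum_turning (l : Fin n → ℕ) (i : ℕ) :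
    (bipSize n l i : ℤ) = 2 * ∑ j, if l j ≤ i then turning l j else 0 := by
  have reindex : ∑ j, (if l (cyc j) ≤ i then Int.sign (l j - l (cyc j)) else 0) =
      ∑ j, if l j ≤ i then Int.sign (l (cycPred j) - l j) else 0 := by
    rw [← cyc_bijective.sum_comp fun j => if l j ≤ i then Int.sign (l (cycPred j) - l j) else 0]
    simp only [leftInverse_cycPred_cyc _]
  simp only [bipSize, Nat.cast_mul, Nat.cast_ofNat, Finset.card_filter, Nat.cast_sum,
    Nat.cast_ite, Nat.cast_one, Nat.cast_zero, ite_separates_eq_add_sign, Finset.sum_add_distrib,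
    reindex]
  simp only [← Finset.sum_add_distrib, turning, ite_add_ite, add_zero]

/-- The level function `j ↦ σ j + 1` with values in `{1, …, n}` given by a permutation `σ` of the
`n` strands; the shift translates between `Fin n`, which starts at `0`, and levels. -/
def levelOfPerm (σ : Equiv.Perm (Fin n)) (j : Fin n) : ℕ := σ j + 1

theorem bijOn_levelOfPerm (σ : Equiv.Perm (Fin n)) :
    Set.BijOn (levelOfPerm σ) Set.univ (Set.Icc 1 n) := by
  refine ⟨fun j _ => ⟨Nat.le_add_left 1 _, (σ j).isLt⟩, fun j _ k _ hjk => ?_, fun v hv => ?_⟩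
  · exact σ.injective (Fin.ext (Nat.succ_injective hjk))
  · obtain ⟨hv_pos, hv_le⟩ := hv
    exact ⟨σ.symm ⟨v - 1, by omega⟩, Set.mem_univ _, by simp [levelOfPerm, hv_pos]⟩

theorem bipSize_levelOfPerm_of_turning {σ : Equiv.Perm (Fin n)} {K : ℕ → ℤ}
    (hσ : ∀ j, turning (levelOfPerm σ) j = 2 * (K (σ j + 1) - K (σ j))) {i : ℕ} (hi : i ≤ n) :
    (bipSize n (levelOfPerm σ) i : ℤ) = 4 * (K i - K 0) := by
  have below : (Finset.range n).filter (· + 1 ≤ i) = Finset.range i := by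
    ext v; simp only [Finset.mem_filter, Finset.mem_range]; omega
  calc (bipSize n (levelOfPerm σ) i : ℤ)
      = 2 * ∑ j, if (σ j : ℕ) + 1 ≤ i then 2 * (K (σ j + 1) - K (σ j)) else 0 := by
        simp only [bipSize_eq_two_mul_sum_turning, hσ, levelOfPerm]
    _ = 2 * ∑ v ∈ Finset.range n, if v + 1 ≤ i then 2 * (K (v + 1) - K v) else 0 := by
        rw [Equiv.sum_comp σ fun v : Fin n => if (v : ℕ) + 1 ≤ i then 2 * (K (v + 1) - K v) else 0,
          ← Fin.sum_univ_eq_sum_range fun v => if v + 1 ≤ i then 2 * (K (v + 1) - K v) else 0]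
    _ = 4 * (K i - K 0) := by
        rw [← Finset.sum_filter, below, ← Finset.mul_sum, Finset.sum_range_sub]
        ring

end Turning

section Steps

variable {n : ℕ} {K : ℕ → ℤ} {v : ℕ}

/-- The step of the path `K` from `v` to `v + 1` goes up. -/
abbrev UpStep (K : ℕ → ℤ) (v : ℕ) : Prop := K v < K (v + 1)

/-- The step of the path `K` from `v` to `v + 1` goes down. -/
abbrev DownStep (K : ℕ → ℤ) (v : ℕ) : Prop := K (v + 1) < K v

/-- The step of the path `K` from `v` to `v + 1` is horizontal. -/
abbrev FlatStep (K : ℕ → ℤ) (v : ℕ) : Prop := K (v + 1) = K v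

theorem upStep_or_downStep_or_flatStep (K : ℕ → ℤ) (v : ℕ) :
    UpStep K v ∨ DownStep K v ∨ FlatStep K v := by omega

theorem count_upStep_add_count_downStep_add_count_flatStep (K : ℕ → ℤ) (i : ℕ) :
    Nat.count (UpStep K) i + Nat.count (DownStep K) i + Nat.count (FlatStep K) i = i := by
  induction i with
  | zero => simp
  | succ i ih =>
    simp only [Nat.count_succ]
    split_ifs <;> omega

/-- A primitive Motzkin path of length `n`: a lattice path with steps `1`, `0`, `-1` that is at
height `0` at its two ends and at positive height in between. -/
structure IsPrimitiveMotzkinPath (n : ℕ) (K : ℕ → ℤ) : Prop where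
  zero : K 0 = 0
  last : K n = 0
  pos : ∀ i, 0 < i → i < n → 0 < K i
  step : ∀ i < n, |K (i + 1) - K i| ≤ 1

/-- The position of the step `v` of a path of length `n` in the cyclic arrangement: up-steps and
down-steps alternate, each in increasing order, and are followed by the flat steps in decreasing
order. -/
def slot (n : ℕ) (K : ℕ → ℤ) (v : ℕ) : ℕ :=
  if UpStep K v then 2 * Nat.count (UpStep K) v
  else if DownStep K v then 2 * Nat.count (DownStep K) v + 1
  else n - 1 - Nat.count (FlatStep K) v

theorem slot_of_upStep (hv : UpStep K v) :
    slot n K v = 2 * Nat.count (UpStep K) v := if_pos hv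

theorem slot_of_downStep (hv : DownStep K v) :
    slot n K v = 2 * Nat.count (DownStep K) v + 1 := by
  rw [slot, if_neg (lt_asymm hv), if_pos hv]

theorem slot_of_flatStep (hv : FlatStep K v) :
    slot n K v = n - 1 - Nat.count (FlatStep K) v := by
  rw [slot, if_neg hv.not_gt, if_neg hv.not_lt]

theorem slot_lt_and_even_of_upStep (hup : UpStep K v) (hv : v < n) :
    slot n K v < 2 * Nat.count (UpStep K) n ∧ slot n K v % 2 = 0 := by
  have count_lt := Nat.count_strict_mono hup hv
  rw [slot_of_upStep hup]
  omega

end Steps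

namespace IsPrimitiveMotzkinPath

variable {n : ℕ} {K : ℕ → ℤ} {v w : ℕ}

theorem eq_count_sub_count (hK : IsPrimitiveMotzkinPath n K) {i : ℕ} (hi : i ≤ n) :
    K i = Nat.count (UpStep K) i - Nat.count (DownStep K) i := by
  induction i with
  | zero => simp [hK.zero]
  | succ i ih =>
    have hstep := abs_le.1 (hK.step i hi)
    have ih := ih (by omega)
    simp only [Nat.count_succ]
    split_ifs <;> omega

theorem count_downStep_eq_count_upStep (hK : IsPrimitiveMotzkinPath n K) :
    Nat.count (DownStep K) n = Nat.count (UpStep K) n := by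
  have height_eq := hK.eq_count_sub_count le_rfl
  have height_last := hK.last
  omega

theorem two_mul_count_upStep_add_count_flatStep (hK : IsPrimitiveMotzkinPath n K) :
    2 * Nat.count (UpStep K) n + Nat.count (FlatStep K) n = n := by
  have count_total := count_upStep_add_count_downStep_add_count_flatStep K n
  have count_eq := hK.count_downStep_eq_count_upStep
  omega

theorem upStep_zero (hK : IsPrimitiveMotzkinPath n K) (hn : 2 ≤ n) : UpStep K 0 := by
  rw [UpStep, hK.zero]
  exact hK.pos 1 one_pos hn

-- If `w < v`, the path would be at height at most `0` right after the down-step `w`.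
theorem lt_downStep_of_count_le (hK : IsPrimitiveMotzkinPath n K) (hv : v < n) (hne : v ≠ w)
    (hw : DownStep K w) (hle : Nat.count (UpStep K) v ≤ Nat.count (DownStep K) w + 1) : v < w := by
  by_contra! hwv
  have hw_lt : w + 1 ≤ v := by omega
  have height_pos : 0 < K (w + 1) := hK.pos _ w.add_one_pos (by omega)
  have height_eq := hK.eq_count_sub_count (i := w + 1) (by omega)
  have up_le := Nat.count_monotone (UpStep K) hw_lt
  have down_succ := Nat.count_succ_eq_succ_count_iff.2 hw
  omega

theorem slot_lt_and_odd_of_downStep (hK : IsPrimitiveMotzkinPath n K) (hv : v < n)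
    (hdown : DownStep K v) : slot n K v < 2 * Nat.count (UpStep K) n ∧ slot n K v % 2 = 1 := by
  have count_lt := Nat.count_strict_mono hdown hv
  have count_eq := hK.count_downStep_eq_count_upStep
  rw [slot_of_downStep hdown]
  omega

theorem le_slot_and_slot_lt_of_flatStep (hK : IsPrimitiveMotzkinPath n K) (hv : v < n)
    (hflat : FlatStep K v) : 2 * Nat.count (UpStep K) n ≤ slot n K v ∧ slot n K v < n := by
  have count_lt := Nat.count_strict_mono hflat hv
  have total := hK.two_mul_count_upStep_add_count_flatStep
  rw [slot_of_flatStep hflat]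
  omega

theorem upStep_iff_slot (hK : IsPrimitiveMotzkinPath n K) (hv : v < n) :
    UpStep K v ↔ slot n K v < 2 * Nat.count (UpStep K) n ∧ slot n K v % 2 = 0 := by
  refine ⟨fun hup => slot_lt_and_even_of_upStep hup hv, fun hslot => ?_⟩
  rcases upStep_or_downStep_or_flatStep K v with hup | hdown | hflat
  · exact hup
  · have range_down := hK.slot_lt_and_odd_of_downStep hv hdown
    omega
  · have range_flat := hK.le_slot_and_slot_lt_of_flatStep hv hflat
    omega

theorem downStep_iff_slot (hK : IsPrimitiveMotzkinPath n K) (hv : v < n) :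
    DownStep K v ↔ slot n K v < 2 * Nat.count (UpStep K) n ∧ slot n K v % 2 = 1 := by
  refine ⟨hK.slot_lt_and_odd_of_downStep hv, fun hslot => ?_⟩
  rcases upStep_or_downStep_or_flatStep K v with hup | hdown | hflat
  · have range_up := slot_lt_and_even_of_upStep hup hv
    omega
  · exact hdown
  · have range_flat := hK.le_slot_and_slot_lt_of_flatStep hv hflat
    omega

theorem flatStep_iff_slot (hK : IsPrimitiveMotzkinPath n K) (hv : v < n) :
    FlatStep K v ↔ 2 * Nat.count (UpStep K) n ≤ slot n K v := by
  have up_iff := hK.upStep_iff_slot hv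
  have down_iff := hK.downStep_iff_slot hv
  omega

theorem slot_lt (hK : IsPrimitiveMotzkinPath n K) (hv : v < n) : slot n K v < n := by
  by_cases hflat : FlatStep K v
  · exact (hK.le_slot_and_slot_lt_of_flatStep hv hflat).2
  · have total := hK.two_mul_count_upStep_add_count_flatStep
    rw [hK.flatStep_iff_slot hv] at hflat
    omega

theorem slot_injOn (hK : IsPrimitiveMotzkinPath n K) : Set.InjOn (slot n K) (Set.Iio n) := by
  intro v hv w hw heq
  rcases upStep_or_downStep_or_flatStep K v with hup | hdown | hflat
  · have hup_w : UpStep K w := by rwa [hK.upStep_iff_slot hw, ← heq, ← hK.upStep_iff_slot hv]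
    rw [slot_of_upStep hup, slot_of_upStep hup_w] at heq
    exact Nat.count_injective hup hup_w (by omega)
  · have hdown_w : DownStep K w := by
      rwa [hK.downStep_iff_slot hw, ← heq, ← hK.downStep_iff_slot hv]
    rw [slot_of_downStep hdown, slot_of_downStep hdown_w] at heq
    exact Nat.count_injective hdown hdown_w (by omega)
  · have hflat_w : FlatStep K w := by
      rwa [hK.flatStep_iff_slot hw, ← heq, ← hK.flatStep_iff_slot hv]
    have total := hK.two_mul_count_upStep_add_count_flatStep
    have count_v := Nat.count_strict_mono hflat hv
    have count_w := Nat.count_strict_mono hflat_w hw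
    rw [slot_of_flatStep hflat, slot_of_flatStep hflat_w] at heq
    exact Nat.count_injective hflat hflat_w (by omega)

theorem exists_perm_slot (hK : IsPrimitiveMotzkinPath n K) :
    ∃ σ : Equiv.Perm (Fin n), ∀ j, slot n K (σ j) = j := by
  let slotFin (v : Fin n) : Fin n := ⟨slot n K v, hK.slot_lt v.isLt⟩
  have slotFin_inj : Function.Injective slotFin := fun v w h =>
    Fin.ext (hK.slot_injOn v.isLt w.isLt (congrArg Fin.val h))
  let τ := Equiv.ofBijective slotFin slotFin_inj.bijective_of_finite
  exact ⟨τ.symm, fun j => congrArg Fin.val (τ.apply_symm_apply j)⟩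

theorem slot_eq_zero_iff (hK : IsPrimitiveMotzkinPath n K) (hn : 2 ≤ n) (hv : v < n) :
    slot n K v = 0 ↔ v = 0 := by
  have slot_zero : slot n K 0 = 0 := by rw [slot_of_upStep (hK.upStep_zero hn), Nat.count_zero]
  refine ⟨fun h => hK.slot_injOn hv (by simp; omega) (h.trans slot_zero.symm), ?_⟩
  rintro rfl
  exact slot_zero

theorem downStep_and_lt_of_slot_eq_succ (hK : IsPrimitiveMotzkinPath n K) (hv : v < n) (hw : w < n)
    (hnext : slot n K w = slot n K v + 1) (hup : UpStep K v) : DownStep K w ∧ v < w := by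
  have hdown : DownStep K w := by
    have range_v := (hK.upStep_iff_slot hv).1 hup
    rw [hK.downStep_iff_slot hw, hnext]
    omega
  rw [slot_of_upStep hup, slot_of_downStep hdown] at hnext
  exact ⟨hdown, hK.lt_downStep_of_count_le hv (by rintro rfl; omega) hdown (by omega)⟩

theorem count_upStep_le_of_slot_eq_succ (hK : IsPrimitiveMotzkinPath n K) (hv : v < n) (hw : w < n)
    (hnext : slot n K w = slot n K v + 1) (hdown : DownStep K v) :
    Nat.count (UpStep K) w ≤ Nat.count (DownStep K) v + 1 := by
  have range_v := (hK.downStep_iff_slot hv).1 hdown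
  rw [slot_of_downStep hdown] at hnext range_v
  by_cases hup : UpStep K w
  · rw [slot_of_upStep hup] at hnext
    omega
  · have range_w := mt (hK.upStep_iff_slot hw).2 hup
    have up_le := Nat.count_monotone (UpStep K) hw.le
    omega

theorem not_downStep_and_lt_of_slot_eq_succ (hK : IsPrimitiveMotzkinPath n K)
    (hv : v < n) (hw : w < n) (hnext : slot n K w = slot n K v + 1) (hup : ¬ UpStep K v) :
    ¬ DownStep K w ∧ w < v := by
  have hdown_w : ¬ DownStep K w := by
    rw [hK.upStep_iff_slot hv] at hup
    rw [hK.downStep_iff_slot hw, hnext]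
    omega
  refine ⟨hdown_w, ?_⟩
  rcases (upStep_or_downStep_or_flatStep K v).resolve_left hup with hdown | hflat
  · exact hK.lt_downStep_of_count_le hw (by rintro rfl; omega) hdown
      (hK.count_upStep_le_of_slot_eq_succ hv hw hnext hdown)
  · have hflat_w : FlatStep K w := by
      rw [hK.flatStep_iff_slot hw, hnext]
      exact Nat.le_succ_of_le ((hK.flatStep_iff_slot hv).1 hflat)
    rw [slot_of_flatStep hflat, slot_of_flatStep hflat_w] at hnext
    exact Nat.lt_of_count_lt_count (p := FlatStep K) (by omega)

theorem ascent_or_descent_cyc (hK : IsPrimitiveMotzkinPath n K) (hn : 2 ≤ n)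
    {σ : Equiv.Perm (Fin n)} (hσ : ∀ j, slot n K (σ j) = j) (j : Fin n) :
    (UpStep K (σ j) ∧ DownStep K (σ (cyc j)) ∧ σ j < σ (cyc j)) ∨
      (¬ UpStep K (σ j) ∧ ¬ DownStep K (σ (cyc j)) ∧ σ (cyc j) < σ j) := by
  have slot_cyc : slot n K (σ (cyc j)) = (j + 1) % n := hσ (cyc j)
  rcases Nat.lt_or_ge (j + 1) n with hj | hj
  · rw [Nat.mod_eq_of_lt hj, ← hσ j] at slot_cyc
    by_cases hup : UpStep K (σ j)
    · exact Or.inl ⟨hup, hK.downStep_and_lt_of_slot_eq_succ (σ j).isLt (σ _).isLt slot_cyc hup⟩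
    · exact Or.inr ⟨hup, hK.not_downStep_and_lt_of_slot_eq_succ (σ j).isLt (σ _).isLt slot_cyc hup⟩
  · right
    have j_last : (j : ℕ) + 1 = n := by omega
    rw [j_last, Nat.mod_self, hK.slot_eq_zero_iff hn (σ _).isLt] at slot_cyc
    have not_up : ¬ UpStep K (σ j) := fun hup => by
      have range_last := slot_lt_and_even_of_upStep hup (σ j).isLt
      have total := hK.two_mul_count_upStep_add_count_flatStep
      rw [hσ j] at range_last
      omega
    have last_ne_zero : (σ j : ℕ) ≠ 0 := by
      rw [Ne, ← hK.slot_eq_zero_iff hn (σ j).isLt, hσ j]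
      omega
    rw [Fin.lt_def, slot_cyc]
    exact ⟨not_up, (hK.upStep_zero hn).not_gt, Nat.pos_of_ne_zero last_ne_zero⟩

theorem exists_perm_turning_eq (hK : IsPrimitiveMotzkinPath n K) (hn : 2 ≤ n) :
    ∃ σ : Equiv.Perm (Fin n), ∀ j, turning (levelOfPerm σ) j = 2 * (K (σ j + 1) - K (σ j)) := by
  obtain ⟨σ, hσ⟩ := hK.exists_perm_slot
  refine ⟨σ, fun j => ?_⟩
  have edge := hK.ascent_or_descent_cyc hn hσ
  have sign_next (k : Fin n) : Int.sign (levelOfPerm σ (cyc k) - levelOfPerm σ k) =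
      if UpStep K (σ k) then 1 else -1 := by
    rcases edge k with ⟨hup, -, hlt⟩ | ⟨hup, -, hlt⟩
    · rw [if_pos hup, Int.sign_eq_one_of_pos (by simpa [levelOfPerm] using hlt)]
    · rw [if_neg hup, Int.sign_eq_neg_one_of_neg (by simpa [levelOfPerm] using hlt)]
  have sign_prev (k : Fin n) : Int.sign (levelOfPerm σ (cycPred k) - levelOfPerm σ k) =
      if DownStep K (σ k) then -1 else 1 := by
    obtain ⟨k, rfl⟩ := cyc_bijective.surjective k
    rw [leftInverse_cycPred_cyc k]
    rcases edge k with ⟨-, hdown, hlt⟩ | ⟨-, hdown, hlt⟩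
    · rw [if_pos hdown, Int.sign_eq_neg_one_of_neg (by simpa [levelOfPerm] using hlt)]
    · rw [if_neg hdown, Int.sign_eq_one_of_pos (by simpa [levelOfPerm] using hlt)]
  have unit_step := abs_le.1 (hK.step (σ j) (σ j).isLt)
  rw [turning, sign_next, sign_prev]
  split_ifs <;> omega

end IsPrimitiveMotzkinPath

/-- The path of a size signature `m` of an `n`-crossing: the sizes divided by `4`, extended by `0`
at both ends. Integer division loses nothing here, since every size is divisible by `4`. -/
def signaturePath (n : ℕ) (m : ℕ → ℕ) (i : ℕ) : ℤ :=
  if 0 < i ∧ i < n then m i / 4 else 0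

section SignaturePath

variable {n : ℕ} {m : ℕ → ℕ}

theorem signaturePath_of_pos_of_lt {i : ℕ} (hi : 0 < i) (hin : i < n) :
    signaturePath n m i = m i / 4 := if_pos ⟨hi, hin⟩

theorem signaturePath_zero : signaturePath n m 0 = 0 := by simp [signaturePath]

theorem signaturePath_self : signaturePath n m n = 0 := by simp [signaturePath]

theorem four_dvd_of_abs_sub (h1 : 4 ∣ m 1)
    (hdiff : ∀ i, 1 ≤ i → i ≤ n - 2 →
      |(m i : ℤ) - (m (i + 1) : ℤ)| = 0 ∨ |(m i : ℤ) - (m (i + 1) : ℤ)| = 4)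
    {i : ℕ} (hi : 1 ≤ i) (hin : i < n) : 4 ∣ m i := by
  induction i, hi using Nat.le_induction with
  | base => exact h1
  | succ i hi ih =>
    have dvd_prev := ih (by omega)
    rcases hdiff i hi (by omega) with h | h
    · rw [abs_eq_zero] at h
      omega
    · rw [abs_eq (by norm_num)] at h
      omega

theorem isPrimitiveMotzkinPath_signaturePath (hn : 2 ≤ n)
    (hpos : ∀ i, 1 ≤ i → i ≤ n - 1 → 0 < m i) (h1 : m 1 = 4) (hend : m (n - 1) = 4)
    (hdiff : ∀ i, 1 ≤ i → i ≤ n - 2 →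
      |(m i : ℤ) - (m (i + 1) : ℤ)| = 0 ∨ |(m i : ℤ) - (m (i + 1) : ℤ)| = 4) :
    IsPrimitiveMotzkinPath n (signaturePath n m) where
  zero := signaturePath_zero
  last := signaturePath_self
  pos i hi hin := by
    have size_pos := hpos i hi (by omega)
    have size_dvd := four_dvd_of_abs_sub (h1 ▸ dvd_rfl) hdiff hi hin
    rw [signaturePath_of_pos_of_lt hi hin]
    omega
  step i hin := by
    rcases Nat.eq_zero_or_pos i with rfl | hi
    · simp [signaturePath_of_pos_of_lt one_pos hn, signaturePath_zero, h1]
    · rcases (show i + 1 ≤ n from hin).eq_or_lt with rfl | hin'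
      · rw [Nat.add_sub_cancel] at hend
        simp [signaturePath_of_pos_of_lt hi, signaturePath_self, hend]
      · rw [signaturePath_of_pos_of_lt hi hin, signaturePath_of_pos_of_lt i.add_one_pos hin',
          abs_le]
        rcases hdiff i hi (by omega) with h | h
        · rw [abs_eq_zero] at h
          omega
        · rw [abs_eq (by norm_num)] at h
          omega

end SignaturePath

/-- Realization theorem: every sequence `(m_1, …, m_{n-1})` of positive
integers with `m_1 = m_{n-1} = 4` and adjacent differences `0` or `4` is realized as the
size signature of some `n`-crossing. -/
theorem realization_of_signature
    (n : ℕ) (hn : 2 ≤ n) (m : ℕ → ℕ)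
    (hpos : ∀ i, 1 ≤ i → i ≤ n - 1 → 0 < m i)
    (h1 : m 1 = 4) (hend : m (n - 1) = 4)
    (hdiff : ∀ i, 1 ≤ i → i ≤ n - 2 →
      |(m i : ℤ) - (m (i + 1) : ℤ)| = 0 ∨ |(m i : ℤ) - (m (i + 1) : ℤ)| = 4) :
    ∃ l : Fin n → ℕ, Set.BijOn l Set.univ (Set.Icc 1 n) ∧
      ∀ i, 1 ≤ i → i ≤ n - 1 → bipSize n l i = m i := by
  have hK := isPrimitiveMotzkinPath_signaturePath hn hpos h1 hend hdiff
  obtain ⟨σ, hσ⟩ := hK.exists_perm_turning_eq hn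
  refine ⟨levelOfPerm σ, bijOn_levelOfPerm σ, fun i hi hin => ?_⟩
  have hin : i < n := by omega
  have size_eq : (bipSize n (levelOfPerm σ) i : ℤ) = 4 * (m i / 4) := by
    rw [bipSize_levelOfPerm_of_turning hσ hin.le, signaturePath_of_pos_of_lt hi hin,
      signaturePath_zero, sub_zero]
  have size_dvd : 4 ∣ m i := four_dvd_of_abs_sub (h1 ▸ dvd_rfl) hdiff hi hin
  omega
end
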